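/- Let G be a unified chain graph (UCG) over a finite vertex set V and let X, Y, Z be pairwise disjoint subsets of V with X ⊥_G Y | Z. Let Y' = {B' ∈ V(G^{X∪Y∪Z}) ∖ (X ∪ Z) : X ⊥_{G^{X∪Y∪Z}} B' | Z} and X' = V(G^{X∪Y∪Z}) ∖ (Y' ∪ Z). Then there is no pure collider route in G^{X∪Y∪Z} between any A' ∈ X' and any B' ∈ Y'. -/

import Mathlib

open Matrix MeasureTheory ProbabilityTheory

attribute [local instance] Classical.propDecidable

noncomputable section

variable {V : Type*}

/-- The submatrix of `S` with rows indexed by `X` and columns indexed by `Y`. -/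
def msub (S : Matrix V V ℝ) (X Y : Finset V) : Matrix X Y ℝ :=
  Matrix.of fun i j => S i.1 j.1

/-- Conditional independence `X ⊥ Y | Z` for a centered Gaussian distribution with
positive definite covariance matrix `S`:  `Σ_{X,Y} − Σ_{X,Z} (Σ_{Z,Z})⁻¹ Σ_{Z,Y} = 0`. -/
def gaussCI [Fintype V] [DecidableEq V] (S : Matrix V V ℝ) (X Y Z : Finset V) : Prop :=
  msub S X Y - msub S X Z * (msub S Z Z)⁻¹ * msub S Z Y = 0

/-- Pairwise disjointness of three sets. -/
def PDisj (X Y Z : Finset V) : Prop :=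
  Disjoint X Y ∧ Disjoint X Z ∧ Disjoint Y Z

/-- Pairwise disjointness of four sets. -/
def PDisj4 (X Y W Z : Finset V) : Prop :=
  Disjoint X Y ∧ Disjoint X W ∧ Disjoint X Z ∧ Disjoint Y W ∧ Disjoint Y Z ∧ Disjoint W Z

/-- A graph with three kinds of edges: undirected (`undir`), solid directed (`solid`,
written `A → B`) and dashed directed (`dashed`, written `A ⇢ B`).  No axioms are imposed. -/
structure PreGraph (V : Type*) where
  undir : V → V → Prop
  solid : V → V → Prop
  dashed : V → V → Prop

namespace PreGraph

variable (G : PreGraph V)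

/-- There is an undirected edge between `a` and `b`. -/
def und (a b : V) : Prop := G.undir a b ∨ G.undir b a

/-- `a` and `b` are adjacent. -/
def adj (a b : V) : Prop :=
  G.und a b ∨ G.solid a b ∨ G.solid b a ∨ G.dashed a b ∨ G.dashed b a

/-- The edge between `a` and `b` is undirected or directed (solid or dashed) from `a` to `b`. -/
def fwd (a b : V) : Prop := G.und a b ∨ G.solid a b ∨ G.dashed a b

/-- A route in `G`: a sequence of nodes `nodes 0, nodes 1, …, nodes len` such that
consecutive nodes are adjacent. -/
structure Route (G : PreGraph V) where
  len : ℕ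
  nodes : ℕ → V
  adj_step : ∀ i < len, G.adj (nodes i) (nodes (i + 1))

/-- `c` is a collider node between `a` and `b`:  `a ⇢ c ⇠ b`, `a ⇢ c − b` (in either of the
two traversal directions) or `a ⇢ c ← b` (in either of the two traversal directions). -/
def colliderTriple (a c b : V) : Prop :=
  (G.dashed a c ∧ G.dashed b c) ∨
  (G.dashed a c ∧ G.und c b) ∨ (G.und a c ∧ G.dashed b c) ∨
  (G.dashed a c ∧ G.solid b c) ∨ (G.solid a c ∧ G.dashed b c)

variable {G} in
/-- The node at position `k` of the route `ρ` is a collider node of `ρ`. -/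
def Route.colliderNodeAt (ρ : G.Route) (k : ℕ) : Prop :=
  1 ≤ k ∧ k < ρ.len ∧ G.colliderTriple (ρ.nodes (k - 1)) (ρ.nodes k) (ρ.nodes (k + 1))

variable {G} in
/-- The positions `p, …, q` of `ρ` form a collider section of `ρ`, i.e. a maximal undirected
subroute `C1 − ⋯ − Cn` of `ρ` such that `A → C1 − ⋯ − Cn ← B` is a subroute of `ρ`. -/
def Route.colliderSectionOcc (ρ : G.Route) (p q : ℕ) : Prop :=
  1 ≤ p ∧ p ≤ q ∧ q + 1 ≤ ρ.len ∧
  (∀ m, p ≤ m → m < q → G.und (ρ.nodes m) (ρ.nodes (m + 1))) ∧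
  G.solid (ρ.nodes (p - 1)) (ρ.nodes p) ∧ G.solid (ρ.nodes (q + 1)) (ρ.nodes q)

variable {G} in
/-- The node at position `k` of `ρ` lies in a collider section of `ρ`. -/
def Route.inColliderSectionAt (ρ : G.Route) (k : ℕ) : Prop :=
  ∃ p q, ρ.colliderSectionOcc p q ∧ p ≤ k ∧ k ≤ q

variable {G} in
/-- The route `ρ` is `Z`-open: (i) all collider nodes are in `Z`, (ii) every collider
section contains some node of `Z`, and (iii) every node which is neither a collider node
nor inside a collider section is outside `Z`. -/
def Route.IsZOpen (ρ : G.Route) (Z : Finset V) : Prop :=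
  (∀ k, ρ.colliderNodeAt k → ρ.nodes k ∈ Z) ∧
  (∀ p q, ρ.colliderSectionOcc p q → ∃ m, p ≤ m ∧ m ≤ q ∧ ρ.nodes m ∈ Z) ∧
  (∀ k ≤ ρ.len, ¬ ρ.colliderNodeAt k → ¬ ρ.inColliderSectionAt k → ρ.nodes k ∉ Z)

variable {G} in
/-- A pure collider route (with at least one edge): every intermediate node is a collider
node or lies in a collider section of the route. -/
def Route.IsPureCollider (ρ : G.Route) : Prop :=
  1 ≤ ρ.len ∧ ∀ k, 0 < k → k < ρ.len → ρ.colliderNodeAt k ∨ ρ.inColliderSectionAt k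

/-- Separation `X ⊥_G Y | Z`: there is no `Z`-open route in `G` between a node of `X` and a
node of `Y`. -/
def Sep (X Y Z : Finset V) : Prop :=
  ¬ ∃ ρ : G.Route,
      ((ρ.nodes 0 ∈ X ∧ ρ.nodes ρ.len ∈ Y) ∨ (ρ.nodes 0 ∈ Y ∧ ρ.nodes ρ.len ∈ X)) ∧
      ρ.IsZOpen Z

section Finite

variable [Fintype V] [DecidableEq V]

/-- The fathers of `X`: nodes `b` with `b → a` in `G` for some `a ∈ X`. -/
def fa (X : Finset V) : Finset V := Finset.univ.filter fun b => ∃ a ∈ X, G.solid b a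

/-- The mothers of `X`: nodes `b` with `b ⇢ a` in `G` for some `a ∈ X`. -/
def mo (X : Finset V) : Finset V := Finset.univ.filter fun b => ∃ a ∈ X, G.dashed b a

/-- The parents of `X`. -/
def pa (X : Finset V) : Finset V := G.fa X ∪ G.mo X

/-- The neighbors of `X`: nodes `b` with `b − a` in `G` for some `a ∈ X`. -/
def nb (X : Finset V) : Finset V := Finset.univ.filter fun b => ∃ a ∈ X, G.und b a

/-- There is a descending route from `a` to `b`: all edges undirected or directed in the
direction of travel, containing at least one directed edge. -/
def descends (a b : V) : Prop :=
  ∃ (n : ℕ) (f : ℕ → V), f 0 = a ∧ f n = b ∧ (∀ i < n, G.fwd (f i) (f (i + 1))) ∧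
    ∃ i < n, G.solid (f i) (f (i + 1)) ∨ G.dashed (f i) (f (i + 1))

/-- The non-descendants of `X`. -/
def nd (X : Finset V) : Finset V := Finset.univ.filter fun b => ¬ ∃ a ∈ X, G.descends a b

/-- Connectivity by undirected routes. -/
def uconn : V → V → Prop := Relation.ReflTransGen G.und

/-- The chain component containing `i`. -/
def cc (i : V) : Finset V := Finset.univ.filter fun j => G.uconn i j

/-- The set of chain components of `G`. -/
def ccs : Finset (Finset V) := Finset.univ.image G.cc

/-- The nodes incident to some edge of `G`. -/
def verts : Finset V := Finset.univ.filter fun a => ∃ b, G.adj a b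

/-- `π` is a topological ordering of the chain components: it is constant on components and
increases along directed edges. -/
def IsTopoOrder (π : V → ℕ) : Prop :=
  (∀ a b, G.uconn a b → π a = π b) ∧ ∀ a b, G.solid a b ∨ G.dashed a b → π a < π b

/-- Equation 1: for every topological ordering of the chain components, each component `K`
is independent of the preceding components minus `Pa(K)` given `Pa(K)`. -/
def eq1 (S : Matrix V V ℝ) : Prop :=
  ∀ π : V → ℕ, G.IsTopoOrder π → ∀ i : V,
    gaussCI S (G.cc i) ((Finset.univ.filter fun b => π b < π i) \ G.pa (G.cc i))
      (G.pa (G.cc i))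

/-- The regression coefficients `β_K = Σ_{K,Pa(K)} (Σ_{Pa(K),Pa(K)})⁻¹`. -/
def beta (S : Matrix V V ℝ) (K : Finset V) : Matrix K (G.pa K) ℝ :=
  msub S K (G.pa K) * (msub S (G.pa K) (G.pa K))⁻¹

/-- The conditional covariance matrix `Λ_K`. -/
def lam (S : Matrix V V ℝ) (K : Finset V) : Matrix K K ℝ :=
  msub S K K - msub S K (G.pa K) * (msub S (G.pa K) (G.pa K))⁻¹ * msub S (G.pa K) K

/-- The precision matrix `Ω = (Σ_{K ∪ Pa(K), K ∪ Pa(K)})⁻¹`. -/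
def om (S : Matrix V V ℝ) (K : Finset V) : Matrix ↥(K ∪ G.pa K) ↥(K ∪ G.pa K) ℝ :=
  (msub S (K ∪ G.pa K) (K ∪ G.pa K))⁻¹

/-- Equation 6: `(β_K)_{i,j} = 0` for all `i ∈ K` and `j ∈ Mo(K) ∖ Mo(i)`. -/
def eq6 (S : Matrix V V ℝ) : Prop :=
  ∀ K ∈ G.ccs, ∀ i (hi : i ∈ K), ∀ j (hj : j ∈ G.pa K),
    j ∈ G.mo K → j ∉ G.mo {i} → G.beta S K ⟨i, hi⟩ ⟨j, hj⟩ = 0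

/-- Equation 7: `Ω_{i,j} = 0` for all `i ∈ K` and `j ∈ Fa(K) ∖ Fa(i)`. -/
def eq7 (S : Matrix V V ℝ) : Prop :=
  ∀ K ∈ G.ccs, ∀ i (hi : i ∈ K), ∀ j (hj : j ∈ G.pa K),
    j ∈ G.fa K → j ∉ G.fa {i} →
    G.om S K ⟨i, Finset.mem_union_left _ hi⟩ ⟨j, Finset.mem_union_right _ hj⟩ = 0

/-- Equation 8: `(Λ_K⁻¹)_{i,j} = 0` for all `i ∈ K` and `j ∈ K ∖ ({i} ∪ Ne(i))`. -/
def eq8 (S : Matrix V V ℝ) : Prop :=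
  ∀ K ∈ G.ccs, ∀ i (hi : i ∈ K), ∀ j (hj : j ∈ K),
    j ≠ i → j ∉ G.nb {i} → (G.lam S K)⁻¹ ⟨i, hi⟩ ⟨j, hj⟩ = 0

/-- `p` satisfies Equation 1 and the zero restrictions of Equations 6–8 w.r.t. `G`. -/
def eqs (S : Matrix V V ℝ) : Prop := G.eq1 S ∧ G.eq6 S ∧ G.eq7 S ∧ G.eq8 S

/-- The global Markov property with respect to `G`, for an abstract ternary
(conditional-independence) relation `I`. -/
def globalMP (I : Finset V → Finset V → Finset V → Prop) : Prop :=
  ∀ X Y Z : Finset V, PDisj X Y Z → G.Sep X Y Z → I X Y Z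

/-- The block-recursive Markov property (B1)–(B3) with respect to `G`. -/
def blockRecMP (I : Finset V → Finset V → Finset V → Prop) : Prop :=
  ∀ K ∈ G.ccs, ∀ i ∈ K,
    I {i} (((G.nd K \ K) \ G.fa K) \ G.mo {i}) (G.fa K ∪ G.mo {i}) ∧
    I {i} (((G.nd K \ K) \ G.fa {i}) \ G.mo K) ((K \ {i}) ∪ G.fa {i} ∪ G.mo K) ∧
    ∀ j ∈ K, j ≠ i → j ∉ G.nb {i} → I {i} {j} ((K \ {i, j}) ∪ G.pa K)

/-- The pairwise Markov property (P1)–(P2) with respect to `G`. -/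
def pairwiseMP (I : Finset V → Finset V → Finset V → Prop) : Prop :=
  ∀ i j : V, i ≠ j → ¬ G.adj i j → ∀ K ∈ G.ccs, i ∈ K →
    (j ∈ ((G.nd {i} \ K) \ G.fa K) \ G.mo {i} → I {i} {j} ((G.nd {i} \ K) \ {j})) ∧
    (j ∈ ((G.nd {i} \ {i}) \ G.fa {i}) \ G.mo K → I {i} {j} (G.nd {i} \ {i, j}))

/-- The local Markov property (L1)–(L2) with respect to `G`. -/
def localMP (I : Finset V → Finset V → Finset V → Prop) : Prop :=
  ∀ K ∈ G.ccs, ∀ i ∈ K,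
    I {i} (((G.nd {i} \ K) \ G.fa K) \ G.mo {i}) (G.fa K ∪ G.mo {i}) ∧
    I {i} ((((G.nd {i} \ {i}) \ G.pa {i}) \ G.nb {i}) \ G.mo (G.nb {i}))
      (G.pa {i} ∪ G.nb {i} ∪ G.mo (G.nb {i}))

/-- The subgraph `G^U`: it keeps the edge `A ⊸ B` (with its type and orientation) iff `G`
has a route `A ⊸ B ⊸ ⋯ ⊸ C` with `C ∈ U`, all edges undirected or directed in the
direction of travel, and no subroute `R ⇢ S − T`. -/
def goodFrom (U : Finset V) (a b : V) : Prop :=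
  ∃ (f : ℕ → V) (n : ℕ), 1 ≤ n ∧ f 0 = a ∧ f 1 = b ∧ f n ∈ U ∧
    (∀ i < n, G.fwd (f i) (f (i + 1))) ∧
    ∀ i, i + 2 ≤ n → ¬ (G.dashed (f i) (f (i + 1)) ∧ G.und (f (i + 1)) (f (i + 2)))

/-- The graph `G^U`. -/
def derived (U : Finset V) : PreGraph V where
  undir a b := G.undir a b ∧ G.goodFrom U a b
  solid a b := G.solid a b ∧ G.goodFrom U a b
  dashed a b := G.dashed a b ∧ G.goodFrom U a b

/-- The set `Y'` used in Lemmas 2 and 3: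
`Y' = {B' ∈ V(G^{X∪Y∪Z}) ∖ (X ∪ Z) : X ⊥_{G^{X∪Y∪Z}} B' | Z}`. -/
def derivedYp (X Y Z : Finset V) : Finset V :=
  ((G.derived (X ∪ Y ∪ Z)).verts \ (X ∪ Z)).filter fun b =>
    (G.derived (X ∪ Y ∪ Z)).Sep X {b} Z

/-- The set `X' = V(G^{X∪Y∪Z}) ∖ (Y' ∪ Z)` used in Lemmas 2 and 3. -/
def derivedXp (X Y Z : Finset V) : Finset V :=
  (G.derived (X ∪ Y ∪ Z)).verts \ (G.derivedYp X Y Z ∪ Z)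

end Finite

end PreGraph

/-- A chain graph: at most one edge between any pair of distinct nodes (undirected, solid
directed, or dashed directed) and no semidirected cycles. -/
structure ChainGraph (V : Type*) extends PreGraph V where
  undir_symm : ∀ a b, toPreGraph.undir a b → toPreGraph.undir b a
  undir_irrefl : ∀ a, ¬ toPreGraph.undir a a
  solid_irrefl : ∀ a, ¬ toPreGraph.solid a a
  dashed_irrefl : ∀ a, ¬ toPreGraph.dashed a a
  undir_not_solid : ∀ a b, toPreGraph.undir a b → ¬ toPreGraph.solid a b
  undir_not_dashed : ∀ a b, toPreGraph.undir a b → ¬ toPreGraph.dashed a b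
  solid_not_solid : ∀ a b, toPreGraph.solid a b → ¬ toPreGraph.solid b a
  solid_not_dashed : ∀ a b, toPreGraph.solid a b → ¬ toPreGraph.dashed a b
  solid_not_dashed_rev : ∀ a b, toPreGraph.solid a b → ¬ toPreGraph.dashed b a
  dashed_not_dashed : ∀ a b, toPreGraph.dashed a b → ¬ toPreGraph.dashed b a
  no_semidirected_cycle : ¬ ∃ (f : ℕ → V) (n : ℕ), 1 ≤ n ∧ f n = f 0 ∧
    (toPreGraph.solid (f 0) (f 1) ∨ toPreGraph.dashed (f 0) (f 1)) ∧
    ∀ i < n, toPreGraph.fwd (f i) (f (i + 1))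

namespace ChainGraph

variable (G : ChainGraph V)

/-- An LWF chain graph: no dashed directed edges. -/
def IsLWF : Prop := ∀ a b, ¬ G.toPreGraph.dashed a b

/-- An AMP chain graph: no solid directed edges. -/
def IsAMP : Prop := ∀ a b, ¬ G.toPreGraph.solid a b

/-- A unified chain graph: `Fa(K) ∩ Mo(K) = ∅` for every chain component `K`. -/
def IsUCG [Fintype V] [DecidableEq V] : Prop :=
  ∀ K ∈ G.toPreGraph.ccs, Disjoint (G.toPreGraph.fa K) (G.toPreGraph.mo K)

end ChainGraph


/-- The AMP chain graph obtained from `G` by deleting every solid directed edge. -/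
def ChainGraph.dropSolid (G : ChainGraph V) : ChainGraph V where
  undir := G.toPreGraph.undir
  solid _ _ := False
  dashed := G.toPreGraph.dashed
  undir_symm := G.undir_symm
  undir_irrefl := G.undir_irrefl
  solid_irrefl _ h := h
  dashed_irrefl := G.dashed_irrefl
  undir_not_solid _ _ _ h := h
  undir_not_dashed := G.undir_not_dashed
  solid_not_solid _ _ h := h.elim
  solid_not_dashed _ _ h := h.elim
  solid_not_dashed_rev _ _ h := h.elim
  dashed_not_dashed := G.dashed_not_dashed
  no_semidirected_cycle := fun ⟨f, n, hn, hcyc, hstart, hsteps⟩ =>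
    G.no_semidirected_cycle ⟨f, n, hn, hcyc, Or.inr (hstart.resolve_left id),
      fun i hi => (hsteps i hi).imp id (Or.imp False.elim id)⟩

/-- The restriction of `ω : V → ℝ` to the coordinates in `S`. -/
def marg (S : Finset V) : (V → ℝ) → (S → ℝ) := fun ω s => ω s.1

lemma marg_measurable (S : Finset V) : Measurable (marg (V := V) S) :=
  measurable_pi_lambda _ fun s => measurable_pi_apply s.1

/-- Conditional independence of the coordinate tuples indexed by `X` and `Y` given the
coordinate tuple indexed by `Z`, for a distribution `μ` on `ℝ^V`. -/
def mCI [Fintype V] (μ : Measure (V → ℝ)) [IsFiniteMeasure μ] (X Y Z : Finset V) : Prop :=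
  CondIndepFun (MeasurableSpace.comap (marg Z) inferInstance) ((marg_measurable Z).comap_le)
    (marg X) (marg Y) μ

/-- A probability distribution `μ` on `ℝ^V` satisfies the global Markov property with
respect to `G`. -/
def measGlobalMarkov [Fintype V] [DecidableEq V] (G : PreGraph V) (μ : Measure (V → ℝ))
    [IsFiniteMeasure μ] : Prop :=
  ∀ X Y Z : Finset V, PDisj X Y Z → G.Sep X Y Z → mCI μ X Y Z

/-- A graphoid over `V`: a ternary relation on pairwise disjoint subsets of `V` satisfying
symmetry, decomposition, weak union, contraction and intersection. -/
structure Graphoid (V : Type*) [DecidableEq V] where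
  rel : Finset V → Finset V → Finset V → Prop
  symmetry : ∀ X Y Z : Finset V, PDisj X Y Z → rel X Y Z → rel Y X Z
  decomposition : ∀ X Y W Z : Finset V, PDisj4 X Y W Z → rel X (Y ∪ W) Z → rel X Y Z
  weakUnion : ∀ X Y W Z : Finset V, PDisj4 X Y W Z → rel X (Y ∪ W) Z → rel X Y (Z ∪ W)
  contraction : ∀ X Y W Z : Finset V, PDisj4 X Y W Z →
    rel X Y (Z ∪ W) → rel X W Z → rel X (Y ∪ W) Z
  intersection : ∀ X Y W Z : Finset V, PDisj4 X Y W Z →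
    rel X Y (Z ∪ W) → rel X W (Z ∪ Y) → rel X (Y ∪ W) Z

/-- The conditional variance `Σ_{a,a|B} = Σ_{a,a} − Σ_{a,B} (Σ_{B,B})⁻¹ Σ_{B,a}`. -/
def condVar [Fintype V] [DecidableEq V] (S : Matrix V V ℝ) (a : V) (B : Finset V) : ℝ :=
  S a a - ∑ b₁ : B, ∑ b₂ : B, S a b₁.1 * (msub S B B)⁻¹ b₁ b₂ * S b₂.1 a

/-! A `Z`-open route splits, at its nodes that are not in a collider, into pure collider routes with
ends outside `Z`. In `G^{X∪Y∪Z}` this has a converse: a chain of pure collider routes that starts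
in `X` and whose links meet outside `Z` can be turned into a `Z`-open route from `X` to its end.
Indeed, if a collider avoids `Z`, then one of its nodes is the head of an edge, and this edge
continues along forward edges to `X ∪ Y ∪ Z`. Either the continuation meets `Z`, and then the route
can walk down to that node and back up instead of forming the collider, or it ends in `X`, and then
the route can be restarted from there. It cannot end in `Y`, because `X ⊥_G Y | Z` passes to the
subgraph. So the nodes outside `Z` that `X` reaches by open routes are closed under
pure collider routes; they include `X'` and avoid `Y'`, hence no such route joins the two.
-/

lemma exists_seq_of_reflTransGen {α : Type*} {r : α → α → Prop} {a b : α}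
    (h : Relation.ReflTransGen r a b) :
    ∃ (n : ℕ) (f : ℕ → α), f 0 = a ∧ f n = b ∧ ∀ i < n, r (f i) (f (i + 1)) := by
  induction h using Relation.ReflTransGen.head_induction_on with
  | refl => exact ⟨0, fun _ => b, rfl, rfl, by simp⟩
  | @head a c hac _ ih =>
    obtain ⟨n, f, rfl, hn, hf⟩ := ih
    refine ⟨n + 1, fun i => i.casesOn a f, rfl, hn, fun i hi => ?_⟩
    cases i with
    | zero => exact hac
    | succ i => exact hf i (by omega)

namespace PreGraph

/-- A graph with at most one type and orientation of edge between any two nodes. It captures the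
part of the definition of a chain graph that passes to subgraphs and that routes depend on. -/
structure IsSimple (G : PreGraph V) : Prop where
  und_not_solid : ∀ a b, G.und a b → ¬ G.solid a b
  und_not_dashed : ∀ a b, G.und a b → ¬ G.dashed a b
  solid_not_solid : ∀ a b, G.solid a b → ¬ G.solid b a
  solid_not_dashed : ∀ a b, G.solid a b → ¬ G.dashed a b
  solid_not_dashed_rev : ∀ a b, G.solid a b → ¬ G.dashed b a
  dashed_not_dashed : ∀ a b, G.dashed a b → ¬ G.dashed b a

/-- The nodes `a` and `b` are the ends of a pure collider route, with one constructor for each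
shape that such a route can take in a simple graph. -/
inductive ColliderLink (G : PreGraph V) : V → V → Prop
  | edge {a b} : G.adj a b → ColliderLink G a b
  | node {a c b} : G.colliderTriple a c b → ColliderLink G a b
  | line {a c d b} : G.dashed a c → G.und c d → G.dashed b d → ColliderLink G a b
  | solid {a c d b} : G.solid a c → G.uconn c d → G.solid b d → ColliderLink G a b

/-- Adjacency in the augmented graph, which joins two nodes outside `Z` when some pure collider
route does. Connectivity in it is a relaxation of the existence of a `Z`-open route. -/
def AugAdj (G : PreGraph V) (Z : Finset V) (a b : V) : Prop :=
  a ∉ Z ∧ b ∉ Z ∧ G.ColliderLink a b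

section Symmetry

variable {G : PreGraph V} {Z : Finset V} {a b c : V}

lemma und_symm (h : G.und a b) : G.und b a := h.symm

lemma uconn_symm (h : G.uconn a b) : G.uconn b a :=
  have : Std.Symm G.und := ⟨fun _ _ => und_symm⟩
  Relation.ReflTransGen.stdSymm.symm _ _ h

lemma adj_symm (h : G.adj a b) : G.adj b a := by
  unfold adj und at *
  tauto

lemma colliderTriple_symm (h : G.colliderTriple a c b) : G.colliderTriple b c a := by
  unfold colliderTriple und at *
  tauto

lemma ColliderLink.symm (h : G.ColliderLink a b) : G.ColliderLink b a := by
  cases h with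
  | edge h => exact .edge (adj_symm h)
  | node h => exact .node (colliderTriple_symm h)
  | line ha hu hb => exact .line hb (und_symm hu) ha
  | solid ha hu hb => exact .solid hb (uconn_symm hu) ha

lemma AugAdj.symm (h : G.AugAdj Z a b) : G.AugAdj Z b a := ⟨h.2.1, h.1, h.2.2.symm⟩

lemma reflTransGen_augAdj_symm (h : Relation.ReflTransGen (G.AugAdj Z) a b) :
    Relation.ReflTransGen (G.AugAdj Z) b a :=
  have : Std.Symm (G.AugAdj Z) := ⟨fun _ _ => AugAdj.symm⟩
  Relation.ReflTransGen.stdSymm.symm _ _ h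

end Symmetry

namespace Route

variable {G : PreGraph V} {ρ : G.Route} {Z : Finset V} {i j k : ℕ}

/-- The node at position `k` of `ρ` is a collider node or lies in a collider section, which is to
say that it does not have to be outside `Z` for `ρ` to be `Z`-open. -/
def IsColliderAt (ρ : G.Route) (k : ℕ) : Prop :=
  ρ.colliderNodeAt k ∨ ρ.inColliderSectionAt k

lemma not_isColliderAt_zero : ¬ ρ.IsColliderAt 0 := by
  rintro (⟨h, -⟩ | ⟨p, q, ⟨h, -⟩, hp, -⟩) <;> omega

lemma not_isColliderAt_len : ¬ ρ.IsColliderAt ρ.len := by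
  rintro (⟨-, h, -⟩ | ⟨p, q, ⟨-, -, h, -⟩, -, hq⟩) <;> omega

lemma IsZOpen.notMem (hρ : ρ.IsZOpen Z) (hk : k ≤ ρ.len) (h : ¬ ρ.IsColliderAt k) :
    ρ.nodes k ∉ Z :=
  hρ.2.2 k hk (fun h' => h (.inl h')) (fun h' => h (.inr h'))

lemma inColliderSectionAt.solid_or_und (h : ρ.inColliderSectionAt (k + 1)) :
    G.solid (ρ.nodes k) (ρ.nodes (k + 1)) ∨ G.und (ρ.nodes k) (ρ.nodes (k + 1)) := by
  obtain ⟨p, q, ⟨-, -, -, hund, hsolid, -⟩, hp, hq⟩ := h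
  rcases hp.eq_or_lt with rfl | hp
  · exact .inl hsolid
  · exact .inr (hund k (by omega) (by omega))

lemma inColliderSectionAt.of_succ (hG : G.IsSimple)
    (hund : G.und (ρ.nodes k) (ρ.nodes (k + 1))) (h : ρ.inColliderSectionAt (k + 1)) :
    ρ.inColliderSectionAt k := by
  obtain ⟨p, q, h, hp, hq⟩ := h
  rcases hp.eq_or_lt with rfl | hp
  · exact absurd h.2.2.2.2.1 (hG.und_not_solid _ _ hund)
  · exact ⟨p, q, h, by omega, by omega⟩

lemma not_isColliderAt_of_backward (hG : G.IsSimple)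
    (h : G.solid (ρ.nodes (k + 1)) (ρ.nodes k) ∨ G.dashed (ρ.nodes (k + 1)) (ρ.nodes k)) :
    ¬ ρ.IsColliderAt (k + 1) := by
  rintro (⟨-, -, h'⟩ | h')
  · simp only [Nat.add_sub_cancel] at h'
    grind [IsSimple, colliderTriple, und_symm]
  · grind [IsSimple, h'.solid_or_und, und_symm]

lemma eq_of_backward (hG : G.IsSimple) (hcol : ∀ m, i < m → m < j → ρ.IsColliderAt m)
    (hik : i ≤ k) (hkj : k < j)
    (h : G.solid (ρ.nodes (k + 1)) (ρ.nodes k) ∨ G.dashed (ρ.nodes (k + 1)) (ρ.nodes k)) :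
    k + 1 = j := by
  by_contra hne
  exact not_isColliderAt_of_backward hG h (hcol (k + 1) (by omega) (by omega))

lemma colliderLink_of_inColliderSectionAt (hG : G.IsSimple) (hij : i < j)
    (hi : ¬ ρ.IsColliderAt i) (hj : ¬ ρ.IsColliderAt j)
    (hcol : ∀ m, i < m → m < j → ρ.IsColliderAt m) (h : ρ.inColliderSectionAt (i + 1)) :
    G.ColliderLink (ρ.nodes i) (ρ.nodes j) := by
  obtain ⟨p, q, hsec, hp, hq⟩ := h
  obtain rfl : p = i + 1 := by
    by_contra hne
    exact hi (.inr ⟨p, q, hsec, by omega, by omega⟩)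
  have hqj : q < j := by
    by_contra! hqj
    exact hj (.inr ⟨_, q, hsec, by omega, hqj⟩)
  obtain ⟨-, -, -, hund, hsolid, hsolid'⟩ := hsec
  obtain rfl := eq_of_backward hG hcol (by omega) hqj (.inl hsolid')
  have hconn : G.uconn (ρ.nodes (i + 1)) (ρ.nodes q) :=
    (reflTransGen_of_succ_of_le (fun m n => G.und (ρ.nodes m) (ρ.nodes n))
      (fun m hm => hund m hm.1 hm.2) hq).lift ρ.nodes fun _ _ => id
  exact .solid hsolid hconn hsolid'

lemma colliderLink_of_colliderNodeAt (hG : G.IsSimple) (hij : i + 1 < j)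
    (hcol : ∀ m, i < m → m < j → ρ.IsColliderAt m) (h : ρ.colliderNodeAt (i + 1)) :
    G.ColliderLink (ρ.nodes i) (ρ.nodes j) := by
  obtain ⟨-, -, htriple⟩ := h
  simp only [Nat.add_sub_cancel] at htriple
  by_cases hj : i + 2 = j
  · exact hj ▸ .node htriple
  have hforward := mt (eq_of_backward hG hcol (k := i + 1) (by omega) hij) hj
  obtain ⟨hdashed, hund⟩ : G.dashed (ρ.nodes i) (ρ.nodes (i + 1)) ∧
      G.und (ρ.nodes (i + 1)) (ρ.nodes (i + 2)) := by
    unfold colliderTriple at htriple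
    tauto
  have hnode : ρ.colliderNodeAt (i + 2) := by
    refine (hcol (i + 2) (by omega) (by omega)).resolve_right fun hsec => ?_
    rcases (hsec.of_succ hG hund).solid_or_und with h | h
    · exact hG.solid_not_dashed _ _ h hdashed
    · exact hG.und_not_dashed _ _ h hdashed
  have hdashed' : G.dashed (ρ.nodes (i + 3)) (ρ.nodes (i + 2)) := by
    have htriple' := hnode.2.2
    simp only [Nat.add_one_sub_one] at htriple'
    grind [IsSimple, colliderTriple]
  obtain rfl := eq_of_backward hG hcol (k := i + 2) (by omega) (by omega) (.inr hdashed')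
  exact .line hdashed hund hdashed'

lemma colliderLink_of_forall_between (hG : G.IsSimple) (hij : i < j) (hj : j ≤ ρ.len)
    (hi : ¬ ρ.IsColliderAt i) (hj' : ¬ ρ.IsColliderAt j)
    (hcol : ∀ m, i < m → m < j → ρ.IsColliderAt m) :
    G.ColliderLink (ρ.nodes i) (ρ.nodes j) := by
  rcases (Nat.succ_le_of_lt hij).eq_or_lt with rfl | hlt
  · exact .edge (ρ.adj_step i hj)
  rcases hcol (i + 1) (by omega) hlt with hnode | hsec
  · exact colliderLink_of_colliderNodeAt hG hlt hcol hnode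
  · exact colliderLink_of_inColliderSectionAt hG hij hi hj' hcol hsec

lemma IsPureCollider.colliderLink (hG : G.IsSimple) (hρ : ρ.IsPureCollider) :
    G.ColliderLink (ρ.nodes 0) (ρ.nodes ρ.len) :=
  colliderLink_of_forall_between hG hρ.1 le_rfl not_isColliderAt_zero not_isColliderAt_len hρ.2

lemma IsZOpen.reflTransGen_augAdj_of_not_isColliderAt (hG : G.IsSimple) (hρ : ρ.IsZOpen Z)
    (hk : k ≤ ρ.len) (h : ¬ ρ.IsColliderAt k) :
    Relation.ReflTransGen (G.AugAdj Z) (ρ.nodes 0) (ρ.nodes k) := by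
  induction k using Nat.strong_induction_on with
  | _ k ih =>
    rcases Nat.eq_zero_or_pos k with rfl | hk0
    · exact .refl
    classical
    let i := Nat.findGreatest (fun i => ¬ ρ.IsColliderAt i) (k - 1)
    have hi : ¬ ρ.IsColliderAt i :=
      Nat.findGreatest_spec (P := fun i => ¬ ρ.IsColliderAt i) (Nat.zero_le _)
        not_isColliderAt_zero
    have hik : i < k := lt_of_le_of_lt (Nat.findGreatest_le _) (by omega)
    have hcol : ∀ m, i < m → m < k → ρ.IsColliderAt m := fun m him hmk =>
      not_not.1 (Nat.findGreatest_is_greatest him (by omega))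
    exact (ih i hik (by omega) hi).tail ⟨hρ.notMem (by omega) hi, hρ.notMem hk h,
      colliderLink_of_forall_between hG hik hk hi h hcol⟩

lemma IsZOpen.reflTransGen_augAdj (hG : G.IsSimple) (hρ : ρ.IsZOpen Z) :
    Relation.ReflTransGen (G.AugAdj Z) (ρ.nodes 0) (ρ.nodes ρ.len) :=
  hρ.reflTransGen_augAdj_of_not_isColliderAt hG le_rfl not_isColliderAt_len

end Route

lemma exists_reflTransGen_augAdj_of_not_sep {G : PreGraph V} {X Z : Finset V} {b : V}
    (hG : G.IsSimple) (h : ¬ G.Sep X {b} Z) :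
    ∃ a ∈ X, a ∉ Z ∧ Relation.ReflTransGen (G.AugAdj Z) a b := by
  obtain ⟨ρ, hends, hρ⟩ := not_not.1 h
  have hchain := hρ.reflTransGen_augAdj hG
  simp only [Finset.mem_singleton] at hends
  rcases hends with ⟨h0, hlen⟩ | ⟨h0, hlen⟩
  · exact ⟨_, h0, hρ.notMem (Nat.zero_le _) Route.not_isColliderAt_zero, hlen ▸ hchain⟩
  · exact ⟨_, hlen, hρ.notMem le_rfl Route.not_isColliderAt_len,
      h0 ▸ reflTransGen_augAdj_symm hchain⟩

/-- The memory that an open walk needs at its current node `c` in order to know which edges may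
come next. Whether `c` must lie in `Z` is decided only when the walk leaves `c`. -/
inductive Entry
  /-- The walk starts at `c`, or its last edge points away from `c`. -/
  | tail
  /-- The current section was not entered by a solid edge. -/
  | line
  /-- The current section was entered by a solid edge and avoids `Z` before `c`. -/
  | solid
  /-- The current section was entered by a solid edge and met `Z` before `c`, so that it has to
  become a collider section. -/
  | met
  /-- The last edge is dashed and points to `c`. -/
  | dashed

/-- One step of a walk that is open given `Z`: the node that is left lies in `Z` if it becomes a
collider node, and outside `Z` if it cannot be part of a collider. -/
inductive OpenStep (G : PreGraph V) (Z : Finset V) : V × Entry → V × Entry → Prop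
  | solid {a b e} : G.solid a b → a ∉ Z → e ≠ .met → OpenStep G Z (a, e) (b, .solid)
  | dashed {a b e} : G.dashed a b → a ∉ Z → e ≠ .met → OpenStep G Z (a, e) (b, .dashed)
  | line {a b e} : G.und a b → a ∉ Z → e = .tail ∨ e = .line → OpenStep G Z (a, e) (b, .line)
  | dashed_line {a b} : G.und a b → a ∈ Z → OpenStep G Z (a, .dashed) (b, .line)
  | solid_line {a b} : G.und a b → a ∉ Z → OpenStep G Z (a, .solid) (b, .solid)
  | solid_line_mem {a b} : G.und a b → a ∈ Z → OpenStep G Z (a, .solid) (b, .met)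
  | met_line {a b} : G.und a b → OpenStep G Z (a, .met) (b, .met)
  | solid_back {a b e} : G.solid b a → a ∉ Z → e = .tail ∨ e = .line →
      OpenStep G Z (a, e) (b, .tail)
  | solid_back_mem {a b e} : G.solid b a → a ∈ Z → e = .solid ∨ e = .dashed →
      OpenStep G Z (a, e) (b, .tail)
  | met_back {a b} : G.solid b a → OpenStep G Z (a, .met) (b, .tail)
  | dashed_back {a b} : G.dashed b a → a ∉ Z → OpenStep G Z (a, .tail) (b, .tail)
  | dashed_back_mem {a b e} : G.dashed b a → a ∈ Z → e = .line ∨ e = .solid ∨ e = .dashed →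
      OpenStep G Z (a, e) (b, .tail)

/-- Some walk from `X` whose steps are open given `Z` arrives at `c` with entry `e`. -/
def OpenReach (G : PreGraph V) (X Z : Finset V) (c : V) (e : Entry) : Prop :=
  ∃ a ∈ X, Relation.ReflTransGen (G.OpenStep Z) (a, .tail) (c, e)

/-- Some walk from `X` that is open given `Z` ends at `c`. -/
def OpenlyReached (G : PreGraph V) (X Z : Finset V) (c : V) : Prop :=
  c ∉ Z ∧ ∃ e ≠ Entry.met, G.OpenReach X Z c e

section OpenReach

variable {G : PreGraph V} {X Z : Finset V} {a b c : V} {e e' : Entry}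

lemma OpenStep.adj (h : G.OpenStep Z (a, e) (b, e')) : G.adj a b := by
  unfold PreGraph.adj
  cases h <;> simp_all

lemma OpenStep.mono {H : PreGraph V} (hund : ∀ a b, H.und a b → G.und a b)
    (hsolid : ∀ a b, H.solid a b → G.solid a b) (hdashed : ∀ a b, H.dashed a b → G.dashed a b)
    {x y : V × Entry} (h : H.OpenStep Z x y) : G.OpenStep Z x y := by
  cases h <;> grind [OpenStep]

lemma OpenReach.start (hc : c ∈ X) : G.OpenReach X Z c .tail := ⟨c, hc, .refl⟩

lemma OpenReach.step (h : G.OpenReach X Z a e) (hstep : G.OpenStep Z (a, e) (b, e')) :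
    G.OpenReach X Z b e' := by
  obtain ⟨x, hx, h⟩ := h
  exact ⟨x, hx, h.tail hstep⟩

lemma OpenReach.openlyReached (h : G.OpenReach X Z c e) (hc : c ∉ Z) (he : e ≠ .met) :
    G.OpenlyReached X Z c :=
  ⟨hc, e, he, h⟩

lemma OpenReach.exists_dashed (h : G.OpenReach X Z c .dashed) : ∃ a, G.dashed a c := by
  obtain ⟨x, -, h⟩ := h
  cases h with
  | tail _ hstep => cases hstep with | dashed hac => exact ⟨_, hac⟩

lemma OpenlyReached.mono {H : PreGraph V} (hund : ∀ a b, H.und a b → G.und a b)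
    (hsolid : ∀ a b, H.solid a b → G.solid a b) (hdashed : ∀ a b, H.dashed a b → G.dashed a b)
    (h : H.OpenlyReached X Z c) : G.OpenlyReached X Z c := by
  obtain ⟨hc, e, he, x, hx, h⟩ := h
  exact ⟨hc, e, he, x, hx, .mono (fun _ _ => .mono hund hsolid hdashed) _ _ h⟩

end OpenReach

namespace Route

variable {G : PreGraph V} {Z : Finset V} {ρ : G.Route} {l : ℕ → Entry} {k : ℕ}

/-- The labels `l` describe `ρ` as a walk whose steps are open given `Z`. -/
structure IsRun (ρ : G.Route) (Z : Finset V) (l : ℕ → Entry) : Prop where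
  start : l 0 = .tail
  step : ∀ i < ρ.len, G.OpenStep Z (ρ.nodes i, l i) (ρ.nodes (i + 1), l (i + 1))

lemma IsRun.exists_section_start (hl : ρ.IsRun Z l) (hk : k ≤ ρ.len)
    (h : l k = .solid ∨ l k = .met) :
    ∃ p, 1 ≤ p ∧ p ≤ k ∧ G.solid (ρ.nodes (p - 1)) (ρ.nodes p) ∧
      ∀ m, p ≤ m → m < k → G.und (ρ.nodes m) (ρ.nodes (m + 1)) := by
  induction k with
  | zero => simp [hl.start] at h
  | succ k ih =>
    have hstep := hl.step k hk
    by_cases hsolid : G.solid (ρ.nodes k) (ρ.nodes (k + 1))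
    · exact ⟨k + 1, by omega, le_rfl, hsolid, by omega⟩
    · have hund : G.und (ρ.nodes k) (ρ.nodes (k + 1)) := by grind [cases OpenStep]
      obtain ⟨p, hp, hpk, hps, hu⟩ := ih (by omega) (by grind [cases OpenStep])
      exact ⟨p, hp, by omega, hps, by grind⟩

lemma IsRun.inColliderSectionAt_of_solid_back (hl : ρ.IsRun Z l) (hk : k < ρ.len)
    (h : l k = .solid ∨ l k = .met) (hback : G.solid (ρ.nodes (k + 1)) (ρ.nodes k)) :
    ρ.inColliderSectionAt k := by
  obtain ⟨p, hp, hpk, hsolid, hund⟩ := hl.exists_section_start hk.le h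
  exact ⟨p, k, ⟨hp, hpk, hk, hund, hsolid, hback⟩, hpk, le_rfl⟩

lemma IsRun.inColliderSectionAt_of_met (hG : G.IsSimple) (hl : ρ.IsRun Z l)
    (hend : l ρ.len ≠ .met) (hk : k ≤ ρ.len) (h : l k = .met) : ρ.inColliderSectionAt k := by
  induction hk using Nat.decreasingInduction with
  | self => exact absurd h hend
  | of_succ k hk ih =>
    rcases show G.und (ρ.nodes k) (ρ.nodes (k + 1)) ∧ l (k + 1) = .met ∨
        G.solid (ρ.nodes (k + 1)) (ρ.nodes k) by
      grind [cases OpenStep, hl.step k hk] with ⟨hund, hmet⟩ | hback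
    · exact (ih hmet).of_succ hG hund
    · exact hl.inColliderSectionAt_of_solid_back hk (.inr h) hback

lemma IsRun.isColliderAt_of_mem (hG : G.IsSimple) (hl : ρ.IsRun Z l) (hend : l ρ.len ≠ .met)
    (hk : k < ρ.len) (hZ : ρ.nodes k ∈ Z) : ρ.IsColliderAt k := by
  have hmet : l k = .met → ρ.inColliderSectionAt k :=
    hl.inColliderSectionAt_of_met hG hend hk.le
  have hmet' : G.und (ρ.nodes k) (ρ.nodes (k + 1)) → l (k + 1) = .met →
      ρ.inColliderSectionAt k := fun hund h =>
    (hl.inColliderSectionAt_of_met hG hend hk h).of_succ hG hund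
  have hback := hl.inColliderSectionAt_of_solid_back hk
  have hstep := hl.step k hk
  cases k with
  | zero => grind [IsColliderAt, cases OpenStep, hl.start]
  | succ k =>
    have hprev := hl.step k (by omega)
    have hnode : G.colliderTriple (ρ.nodes k) (ρ.nodes (k + 1)) (ρ.nodes (k + 2)) →
        ρ.IsColliderAt (k + 1) := fun h => .inl ⟨by omega, hk, h⟩
    grind [IsColliderAt, colliderTriple, cases OpenStep]

lemma IsRun.mem_of_colliderNodeAt (hG : G.IsSimple) (hl : ρ.IsRun Z l)
    (h : ρ.colliderNodeAt k) : ρ.nodes k ∈ Z := by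
  obtain ⟨hk, hk', htriple⟩ := h
  obtain ⟨k, rfl⟩ := Nat.exists_eq_add_of_le' hk
  have hstep := hl.step k (by omega)
  have hstep' := hl.step (k + 1) hk'
  simp only [Nat.add_sub_cancel] at htriple
  grind [IsSimple, colliderTriple, und_symm, cases OpenStep]

lemma IsRun.exists_mem_of_colliderSectionOcc (hG : G.IsSimple) (hl : ρ.IsRun Z l) {p q : ℕ}
    (h : ρ.colliderSectionOcc p q) : ∃ m, p ≤ m ∧ m ≤ q ∧ ρ.nodes m ∈ Z := by
  obtain ⟨hp, hpq, hq, hund, hsolid, hback⟩ := h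
  by_contra! hZ
  have hlabel : ∀ m, p ≤ m → m ≤ q → l m = .solid := fun m hpm hmq => by
    induction m, hpm using Nat.le_induction with
    | base =>
      obtain ⟨p, rfl⟩ := Nat.exists_eq_add_of_le' hp
      grind [IsSimple, und_symm, cases OpenStep, hl.step p (by omega)]
    | succ m hpm ih =>
      grind [IsSimple, und_symm, cases OpenStep, hl.step m (by omega)]
  grind [IsSimple, und_symm, cases OpenStep, hl.step q (by omega)]

lemma IsRun.isZOpen (hG : G.IsSimple) (hl : ρ.IsRun Z l) (hend : l ρ.len ≠ .met)
    (hZ : ρ.nodes ρ.len ∉ Z) : ρ.IsZOpen Z := by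
  refine ⟨fun k => hl.mem_of_colliderNodeAt hG,
    fun p q => hl.exists_mem_of_colliderSectionOcc hG, fun k hk hnode hsec hkZ => ?_⟩
  rcases hk.eq_or_lt with rfl | hk
  · exact hZ hkZ
  · exact (hl.isColliderAt_of_mem hG hend hk hkZ).elim hnode hsec

end Route

lemma OpenlyReached.not_sep {G : PreGraph V} {X Y Z : Finset V} {c : V} (hG : G.IsSimple)
    (h : G.OpenlyReached X Z c) (hc : c ∈ Y) : ¬ G.Sep X Y Z := by
  obtain ⟨hcZ, e, he, x, hx, h⟩ := h
  obtain ⟨n, f, h0, hn, hstep⟩ := exists_seq_of_reflTransGen h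
  let ρ : G.Route := ⟨n, fun i => (f i).1, fun i hi => (hstep i hi).adj⟩
  have hlen : ρ.nodes ρ.len = c := congrArg Prod.fst hn
  have hrun : ρ.IsRun Z fun i => (f i).2 := ⟨congrArg Prod.snd h0, hstep⟩
  refine not_not.2 ⟨ρ, .inl ⟨?_, hlen ▸ hc⟩, hrun.isZOpen hG ?_ (hlen ▸ hcZ)⟩
  · rwa [show ρ.nodes 0 = x from congrArg Prod.fst h0]
  · rwa [show (f ρ.len).2 = e from congrArg Prod.snd hn]

/-- A route that enters `c` by a dashed edge (`e = .dashed`) or otherwise (`e = .solid`) can be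
continued to `U` along undirected and forward edges, without a subroute `R ⇢ S − T`. -/
inductive Descends (G : PreGraph V) (U : Finset V) : Entry → V → Prop
  | mem {e c} : c ∈ U → Descends G U e c
  | line {c d} : G.und c d → Descends G U .solid d → Descends G U .solid c
  | solid {e c d} : G.solid c d → Descends G U .solid d → Descends G U e c
  | dashed {e c d} : G.dashed c d → Descends G U .dashed d → Descends G U e c

/-- The property of `G^U` that the separation argument uses: every directed edge can be continued
to `U`. -/
structure ArrowsDescend (G : PreGraph V) (U : Finset V) : Prop where
  solid : ∀ {a b}, G.solid a b → G.Descends U .solid b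
  dashed : ∀ {a b}, G.dashed a b → G.Descends U .dashed b

section Augmented

variable {G : PreGraph V} {U X Z : Finset V} {a b c : V} {e s : Entry}

/-- The walk follows the descent to a node of `Z` and comes back, or to `U` and then restarts in
`X`. A descent that begins with undirected edges brings it back inside the section of `c`, which is
why `.line` and `.met` occur. -/
lemma OpenReach.turn_of_descends (hU : ∀ u ∈ U, G.OpenlyReached X Z u → u ∈ X)
    (hdesc : G.Descends U e c) (hc : c ∉ Z) (hs : s ≠ .met) (hes : e = .dashed ∨ s = .solid)
    (h : G.OpenReach X Z c s) :
    G.OpenReach X Z c .tail ∨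
      e = .solid ∧ (G.OpenReach X Z c .line ∨ G.OpenReach X Z c .met) := by
  induction hdesc generalizing s with
  | mem hcU => exact .inl (.start (hU _ hcU ⟨hc, s, hs, h⟩))
  | @line c d hcd _ ih =>
    obtain rfl := hes.resolve_left nofun
    have h := h.step (.solid_line hcd hc)
    by_cases hd : d ∈ Z
    · exact .inr ⟨rfl, .inr (h.step (.solid_line_mem (und_symm hcd) hd))⟩
    · rcases ih hd (by simp) (.inr rfl) h with h | ⟨-, h | h⟩
      · exact .inr ⟨rfl, .inl (h.step (.line (und_symm hcd) hd (.inl rfl)))⟩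
      · exact .inr ⟨rfl, .inl (h.step (.line (und_symm hcd) hd (.inr rfl)))⟩
      · exact .inr ⟨rfl, .inr (h.step (.met_line (und_symm hcd)))⟩
  | @solid e c d hcd _ ih =>
    left
    have h := h.step (.solid hcd hc hs)
    by_cases hd : d ∈ Z
    · exact h.step (.solid_back_mem hcd hd (.inl rfl))
    · rcases ih hd (by simp) (.inr rfl) h with h | ⟨-, h | h⟩
      · exact h.step (.solid_back hcd hd (.inl rfl))
      · exact h.step (.solid_back hcd hd (.inr rfl))
      · exact h.step (.met_back hcd)
  | @dashed e c d hcd _ ih =>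
    left
    have h := h.step (.dashed hcd hc hs)
    by_cases hd : d ∈ Z
    · exact h.step (.dashed_back_mem hcd hd (by simp))
    · rcases ih hd (by simp) (.inl rfl) h with h | ⟨h, -⟩
      · exact h.step (.dashed_back hcd hd)
      · exact absurd h nofun

lemma OpenReach.solid_or_met_of_uconn (hab : G.uconn a b) (h : G.OpenReach X Z a .solid) :
    G.OpenReach X Z b .solid ∨ G.OpenReach X Z b .met := by
  induction hab with
  | refl => exact .inl h
  | @tail c d _ hcd ih =>
    rcases ih with h | h
    · by_cases hc : c ∈ Z
      · exact .inr (h.step (.solid_line_mem hcd hc))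
      · exact .inl (h.step (.solid_line hcd hc))
    · exact .inr (h.step (.met_line hcd))

variable (hG : G.ArrowsDescend U) (hU : ∀ u ∈ U, G.OpenlyReached X Z u → u ∈ X)
include hG hU

lemma OpenReach.tail_of_dashed_edge (hac : G.dashed a c) (hc : c ∉ Z) (he : e ≠ .met)
    (h : G.OpenReach X Z c e) : G.OpenReach X Z c .tail :=
  (h.turn_of_descends hU (hG.dashed hac) hc he (.inl rfl)).resolve_right nofun

lemma OpenReach.back_of_dashed_edge (hbc : G.dashed b c) (he : e ≠ .met)
    (hc : c ∉ Z ∨ e ≠ .tail) (h : G.OpenReach X Z c e) : G.OpenReach X Z b .tail := by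
  by_cases hcZ : c ∈ Z
  · exact h.step (.dashed_back_mem hbc hcZ (by cases e <;> simp_all))
  · exact (h.tail_of_dashed_edge hG hU hbc hcZ he).step (.dashed_back hbc hcZ)

lemma OpenReach.back_of_solid_edge (hbc : G.solid b c)
    (hc : c ∉ Z ∨ e = .solid ∨ e = .met ∨ e = .dashed) (h : G.OpenReach X Z c e) :
    G.OpenReach X Z b .tail := by
  by_cases hcZ : c ∈ Z
  · cases e with
    | met => exact h.step (.met_back hbc)
    | _ => exact h.step (.solid_back_mem hbc hcZ (by simp_all))
  · cases e with
    | tail => exact h.step (.solid_back hbc hcZ (.inl rfl))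
    | line => exact h.step (.solid_back hbc hcZ (.inr rfl))
    | solid =>
      rcases h.turn_of_descends hU (hG.solid hbc) hcZ (by simp) (.inr rfl) with h | ⟨-, h | h⟩
      · exact h.step (.solid_back hbc hcZ (.inl rfl))
      · exact h.step (.solid_back hbc hcZ (.inr rfl))
      · exact h.step (.met_back hbc)
    | met => exact h.step (.met_back hbc)
    | dashed =>
      obtain ⟨a, hac⟩ := h.exists_dashed
      exact (h.tail_of_dashed_edge hG hU hac hcZ (by simp)).step (.solid_back hbc hcZ (.inl rfl))

lemma OpenReach.line_or_solid_of_und (hcb : G.und c b) (he : e ≠ .met)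
    (hc : c ∉ Z ∨ e = .dashed) (h : G.OpenReach X Z c e) :
    G.OpenReach X Z b .line ∨ G.OpenReach X Z b .solid := by
  by_cases hcZ : c ∈ Z
  · obtain rfl := hc.resolve_left (not_not.2 hcZ)
    exact .inl (h.step (.dashed_line hcb hcZ))
  · cases e with
    | tail => exact .inl (h.step (.line hcb hcZ (.inl rfl)))
    | line => exact .inl (h.step (.line hcb hcZ (.inr rfl)))
    | solid => exact .inr (h.step (.solid_line hcb hcZ))
    | met => exact absurd rfl he
    | dashed =>
      obtain ⟨a, hac⟩ := h.exists_dashed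
      exact .inl ((h.tail_of_dashed_edge hG hU hac hcZ (by simp)).step (.line hcb hcZ (.inl rfl)))

lemma OpenlyReached.of_adj (hab : G.adj a b) (hb : b ∉ Z) (h : G.OpenlyReached X Z a) :
    G.OpenlyReached X Z b := by
  obtain ⟨ha, e, he, h⟩ := h
  rcases hab with hab | hab | hab | hab | hab
  · rcases h.line_or_solid_of_und hG hU hab he (.inl ha) with h | h <;>
      exact h.openlyReached hb (by simp)
  · exact (h.step (.solid hab ha he)).openlyReached hb (by simp)
  · exact (h.back_of_solid_edge hG hU hab (.inl ha)).openlyReached hb (by simp)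
  · exact (h.step (.dashed hab ha he)).openlyReached hb (by simp)
  · exact (h.back_of_dashed_edge hG hU hab he (.inl ha)).openlyReached hb (by simp)

lemma OpenlyReached.of_colliderTriple (hacb : G.colliderTriple a c b) (hb : b ∉ Z)
    (h : G.OpenlyReached X Z a) : G.OpenlyReached X Z b := by
  obtain ⟨ha, e, he, h⟩ := h
  have back_dashed {s : Entry} (hbc : G.dashed b c) (hs : s ≠ .met) (hs' : s ≠ .tail)
      (h : G.OpenReach X Z c s) : G.OpenlyReached X Z b :=
    (h.back_of_dashed_edge hG hU hbc hs (.inr hs')).openlyReached hb (by simp)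
  rcases hacb with ⟨hac, hbc⟩ | ⟨hac, hcb⟩ | ⟨hac, hbc⟩ | ⟨hac, hbc⟩ | ⟨hac, hbc⟩
  · exact back_dashed hbc (by simp) (by simp) (h.step (.dashed hac ha he))
  · rcases (h.step (.dashed hac ha he)).line_or_solid_of_und hG hU hcb (by simp) (.inr rfl)
      with h | h <;> exact h.openlyReached hb (by simp)
  · rcases h.line_or_solid_of_und hG hU hac he (.inl ha) with h | h <;>
      exact back_dashed hbc (by simp) (by simp) h
  · exact ((h.step (.dashed hac ha he)).back_of_solid_edge hG hU hbc (by simp)).openlyReached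
      hb (by simp)
  · exact back_dashed hbc (by simp) (by simp) (h.step (.solid hac ha he))

lemma OpenlyReached.of_colliderLink (hab : G.ColliderLink a b) (hb : b ∉ Z)
    (h : G.OpenlyReached X Z a) : G.OpenlyReached X Z b := by
  cases hab with
  | edge hab => exact h.of_adj hG hU hab hb
  | node hacb => exact h.of_colliderTriple hG hU hacb hb
  | line hac hcd hbd =>
    obtain ⟨ha, e, he, h⟩ := h
    rcases (h.step (.dashed hac ha he)).line_or_solid_of_und hG hU hcd (by simp) (.inr rfl)
      with h | h <;>
      exact (h.back_of_dashed_edge hG hU hbd (by simp) (.inr (by simp))).openlyReached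
        hb (by simp)
  | solid hac hcd hbd =>
    obtain ⟨ha, e, he, h⟩ := h
    rcases (h.step (.solid hac ha he)).solid_or_met_of_uconn hcd with h | h <;>
      exact (h.back_of_solid_edge hG hU hbd (by simp)).openlyReached hb (by simp)

end Augmented

section Derived

variable {G : PreGraph V} {U : Finset V} {a b : V}

lemma derived_und (h : (G.derived U).und a b) : G.und a b := h.imp And.left And.left

lemma IsSimple.derived (hG : G.IsSimple) (U : Finset V) : (G.derived U).IsSimple where
  und_not_solid a b h h' := hG.und_not_solid a b (derived_und h) h'.1
  und_not_dashed a b h h' := hG.und_not_dashed a b (derived_und h) h'.1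
  solid_not_solid a b h h' := hG.solid_not_solid a b h.1 h'.1
  solid_not_dashed a b h h' := hG.solid_not_dashed a b h.1 h'.1
  solid_not_dashed_rev a b h h' := hG.solid_not_dashed_rev a b h.1 h'.1
  dashed_not_dashed a b h h' := hG.dashed_not_dashed a b h.1 h'.1

lemma goodFrom.symm_of_und (hG : G.IsSimple) (hab : G.und a b) (h : G.goodFrom U a b) :
    G.goodFrom U b a := by
  obtain ⟨f, n, -, rfl, rfl, hU, hfwd, hgood⟩ := h
  refine ⟨fun i => i.casesOn (f 1) f, n + 1, by omega, rfl, rfl, hU, fun i hi => ?_,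
    fun i hi => ?_⟩
  · cases i with
    | zero => exact .inl (und_symm hab)
    | succ i => exact hfwd i (by omega)
  · cases i with
    | zero => exact fun h => hG.und_not_dashed _ _ (und_symm hab) h.1
    | succ i => exact hgood i (by omega)

lemma derived_und_of_goodFrom (hG : G.IsSimple) (hab : G.und a b) (h : G.goodFrom U a b) :
    (G.derived U).und a b :=
  hab.imp (⟨·, h⟩) (⟨·, h.symm_of_und hG hab⟩)

lemma derived_descends_of_route (hG : G.IsSimple) (n : ℕ) (f : ℕ → V) (hU : f (n + 1) ∈ U)
    (hfwd : ∀ i < n + 1, G.fwd (f i) (f (i + 1)))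
    (hgood : ∀ i, i + 2 ≤ n + 1 →
      ¬ (G.dashed (f i) (f (i + 1)) ∧ G.und (f (i + 1)) (f (i + 2))))
    {e : Entry} (he : G.dashed (f 0) (f 1) ∨ e = .solid) :
    (G.derived U).Descends U e (f 1) := by
  induction n generalizing f e with
  | zero => exact .mem hU
  | succ n ih =>
    have hfwd' : ∀ i < n + 1, G.fwd (f (i + 1)) (f (i + 2)) := fun i hi => hfwd _ (by omega)
    have hgood' : ∀ i, i + 2 ≤ n + 1 → ¬ (G.dashed (f (i + 1)) (f (i + 2)) ∧
        G.und (f (i + 2)) (f (i + 3))) := fun i hi => hgood _ (by omega)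
    have hedge : G.goodFrom U (f 1) (f 2) :=
      ⟨fun i => f (i + 1), n + 1, by omega, rfl, rfl, hU, hfwd', hgood'⟩
    have htail {e : Entry} := ih (fun i => f (i + 1)) hU hfwd' hgood' (e := e)
    rcases hfwd 1 (by omega) with h | h | h
    · obtain rfl := he.resolve_left fun hdashed => hgood 0 (by omega) ⟨hdashed, h⟩
      exact .line (derived_und_of_goodFrom hG h hedge) (htail (.inr rfl))
    · exact .solid ⟨h, hedge⟩ (htail (.inr rfl))
    · exact .dashed ⟨h, hedge⟩ (htail (.inl h))

lemma goodFrom.derived_descends (hG : G.IsSimple) (h : G.goodFrom U a b) {e : Entry}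
    (he : G.dashed a b ∨ e = .solid) : (G.derived U).Descends U e b := by
  obtain ⟨f, n, hn, rfl, rfl, hU, hfwd, hgood⟩ := h
  obtain ⟨n, rfl⟩ := Nat.exists_eq_add_of_le' hn
  exact derived_descends_of_route hG n f hU hfwd hgood he

lemma derived_arrowsDescend (hG : G.IsSimple) (U : Finset V) : (G.derived U).ArrowsDescend U where
  solid h := h.2.derived_descends hG (.inr rfl)
  dashed h := h.2.derived_descends hG (.inl h.1)

end Derived

section Separation

variable [DecidableEq V] {G : PreGraph V} {X Y Z : Finset V} {a b : V}

lemma Sep.mem_of_openlyReached_derived (hG : G.IsSimple) (hsep : G.Sep X Y Z)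
    (ha : a ∈ X ∪ Y ∪ Z) (h : (G.derived (X ∪ Y ∪ Z)).OpenlyReached X Z a) : a ∈ X := by
  have h' : G.OpenlyReached X Z a :=
    h.mono (fun _ _ => derived_und) (fun _ _ => And.left) (fun _ _ => And.left)
  have haY : a ∉ Y := fun haY => h'.not_sep hG haY hsep
  simpa [haY, h.1] using ha

lemma Sep.openlyReached_derived_of_colliderLink (hG : G.IsSimple) (hsep : G.Sep X Y Z)
    (hab : (G.derived (X ∪ Y ∪ Z)).ColliderLink a b) (hb : b ∉ Z)
    (ha : (G.derived (X ∪ Y ∪ Z)).OpenlyReached X Z a) :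
    (G.derived (X ∪ Y ∪ Z)).OpenlyReached X Z b :=
  ha.of_colliderLink (derived_arrowsDescend hG _)
    (fun _ => hsep.mem_of_openlyReached_derived hG) hab hb

lemma Sep.openlyReached_derived_of_reflTransGen (hG : G.IsSimple) (hsep : G.Sep X Y Z)
    (hab : Relation.ReflTransGen ((G.derived (X ∪ Y ∪ Z)).AugAdj Z) a b)
    (ha : (G.derived (X ∪ Y ∪ Z)).OpenlyReached X Z a) :
    (G.derived (X ∪ Y ∪ Z)).OpenlyReached X Z b := by
  induction hab with
  | refl => exact ha
  | tail _ hbc ih => exact hsep.openlyReached_derived_of_colliderLink hG hbc.2.2 hbc.2.1 ih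

variable [Fintype V]

lemma mem_derivedYp :
    b ∈ G.derivedYp X Y Z ↔ b ∈ (G.derived (X ∪ Y ∪ Z)).verts ∧ b ∉ X ∧ b ∉ Z ∧
      (G.derived (X ∪ Y ∪ Z)).Sep X {b} Z := by
  simp only [derivedYp, Finset.mem_filter, Finset.mem_sdiff, Finset.mem_union, not_or, and_assoc]

lemma mem_derivedXp :
    a ∈ G.derivedXp X Y Z ↔
      a ∈ (G.derived (X ∪ Y ∪ Z)).verts ∧ a ∉ G.derivedYp X Y Z ∧ a ∉ Z := by
  simp only [derivedXp, Finset.mem_sdiff, Finset.mem_union, not_or]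

lemma Sep.openlyReached_of_mem_derivedXp (hG : G.IsSimple) (hsep : G.Sep X Y Z)
    (ha : a ∈ G.derivedXp X Y Z) : (G.derived (X ∪ Y ∪ Z)).OpenlyReached X Z a := by
  obtain ⟨haV, haYp, haZ⟩ := mem_derivedXp.1 ha
  by_cases haX : a ∈ X
  · exact (OpenReach.start haX).openlyReached haZ (by simp)
  have hnot : ¬ (G.derived (X ∪ Y ∪ Z)).Sep X {a} Z := fun h =>
    haYp (mem_derivedYp.2 ⟨haV, haX, haZ, h⟩)
  obtain ⟨x, hx, hxZ, hxa⟩ := exists_reflTransGen_augAdj_of_not_sep (hG.derived _) hnot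
  exact hsep.openlyReached_derived_of_reflTransGen hG hxa
    ((OpenReach.start hx).openlyReached hxZ (by simp))

lemma Sep.not_colliderLink_derived (hG : G.IsSimple) (hsep : G.Sep X Y Z)
    (ha : a ∈ G.derivedXp X Y Z) (hb : b ∈ G.derivedYp X Y Z) :
    ¬ (G.derived (X ∪ Y ∪ Z)).ColliderLink a b := fun hab => by
  obtain ⟨-, -, hbZ, hbsep⟩ := mem_derivedYp.1 hb
  have hreach := hsep.openlyReached_derived_of_colliderLink hG hab hbZ
    (hsep.openlyReached_of_mem_derivedXp hG ha)
  exact hreach.not_sep (hG.derived _) (Finset.mem_singleton_self b) hbsep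

end Separation

end PreGraph

theorem no_pure_collider_route_between_Xp_and_Yp_general [Fintype V] [DecidableEq V]
    (G : PreGraph V) (hG : G.IsSimple) (X Y Z : Finset V) (hsep : G.Sep X Y Z) :
    ¬ ∃ ρ : (G.derived (X ∪ Y ∪ Z)).Route, ρ.IsPureCollider ∧
      ((ρ.nodes 0 ∈ G.derivedXp X Y Z ∧ ρ.nodes ρ.len ∈ G.derivedYp X Y Z) ∨
        (ρ.nodes 0 ∈ G.derivedYp X Y Z ∧ ρ.nodes ρ.len ∈ G.derivedXp X Y Z)) := by
  rintro ⟨ρ, hρ, ⟨h0, hlen⟩ | ⟨h0, hlen⟩⟩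
  · exact hsep.not_colliderLink_derived hG h0 hlen (hρ.colliderLink (hG.derived _))
  · exact hsep.not_colliderLink_derived hG hlen h0 (hρ.colliderLink (hG.derived _)).symm

lemma ChainGraph.isSimple (G : ChainGraph V) : G.toPreGraph.IsSimple where
  und_not_solid a b h := G.undir_not_solid a b (h.elim id (G.undir_symm b a))
  und_not_dashed a b h := G.undir_not_dashed a b (h.elim id (G.undir_symm b a))
  solid_not_solid := G.solid_not_solid
  solid_not_dashed := G.solid_not_dashed
  solid_not_dashed_rev := G.solid_not_dashed_rev
  dashed_not_dashed := G.dashed_not_dashed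

/-- **Lemma 3.** If `X ⊥_G Y | Z` in a UCG `G`, then there is no pure collider route in
`G^{X∪Y∪Z}` between some `A' ∈ X'` and `B' ∈ Y'`. -/
theorem no_pure_collider_route_between_Xp_and_Yp
    {V : Type*} [Fintype V] [DecidableEq V] (G : ChainGraph V) (hG : G.IsUCG)
    (X Y Z : Finset V) (hd : PDisj X Y Z) (hsep : G.toPreGraph.Sep X Y Z) :
    ¬ ∃ ρ : (G.toPreGraph.derived (X ∪ Y ∪ Z)).Route,
      ρ.IsPureCollider ∧
      ((ρ.nodes 0 ∈ G.toPreGraph.derivedXp X Y Z ∧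
          ρ.nodes ρ.len ∈ G.toPreGraph.derivedYp X Y Z) ∨
        (ρ.nodes 0 ∈ G.toPreGraph.derivedYp X Y Z ∧
          ρ.nodes ρ.len ∈ G.toPreGraph.derivedXp X Y Z)) :=
  no_pure_collider_route_between_Xp_and_Yp_general G.toPreGraph G.isSimple X Y Z hsep
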